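/- arXiv:2109.00738 — 2 statements merged into one kernel-verified Lean document; each statement's English description precedes it below -/
import Mathlib

section
/- For each m ∈ {0, 1, 2} there exist polynomials B, C ∈ ℚ[X] with B ≠ 0, deg B ≤ 2 and C monic of degree 3, such that the Weierstrass equation Y² = X³ + α₂(T)X² + α₄(T)X + α₆(T) determined by the identity X³ + α₂(T)X² + α₄(T)X + α₆(T) = B(X)T + C(X) has nonzero discriminant in ℚ(T) and the resulting elliptic curve E over ℚ(T) has rank r_E = m. -/
open Polynomial UniqueFactorizationMonoid
open scoped TensorProduct

noncomputable section
attribute [local instance] Classical.propDecidable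

/-- The coefficient `αᵢ ∈ ℚ[T]` of `Xⁱ` in `A(X)T² + B(X)T + C(X)`. -/
def alph (A B C : ℚ[X]) (i : ℕ) : ℚ[X] :=
  Polynomial.C (A.coeff i) * Polynomial.X ^ 2 + Polynomial.C (B.coeff i) * Polynomial.X +
    Polynomial.C (C.coeff i)

/-- The Weierstrass curve `Y² = X³ + α₂(T)X² + α₄(T)X + α₆(T)` over `ℚ(T)`,
i.e. `Y² = A(X)T² + B(X)T + C(X)`. -/
def surfW (A B C : ℚ[X]) : WeierstrassCurve (RatFunc ℚ) where
  a₁ := 0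
  a₂ := algebraMap (Polynomial ℚ) (RatFunc ℚ) (alph A B C 2)
  a₃ := 0
  a₄ := algebraMap (Polynomial ℚ) (RatFunc ℚ) (alph A B C 1)
  a₆ := algebraMap (Polynomial ℚ) (RatFunc ℚ) (alph A B C 0)

/-- The rank of a Weierstrass curve over `ℚ(T)`: `dim_ℚ (E(ℚ(T)) ⊗_ℤ ℚ)`. -/
def rankW (W : WeierstrassCurve (RatFunc ℚ)) : ℕ :=
  Module.finrank ℚ (ℚ ⊗[ℤ] W.toAffine.Point)

/-!
The curve `Y² = T * B(X) + Q(X)` is the generic member of the pencil `Y² - Q(X) = T * B(X)` of plane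
curves. Its function field is therefore `ℚ(X, Y)`, and its affine coordinate ring consists of
fractions of `ℚ[X, Y]` with denominators dividing powers of `B`. A point `P` at which `B` does not
vanish gives a prime ideal of `ℚ[X, Y]` that is not maximal, because `T` is transcendental, and such
a prime is principal. Its generator is a function on the curve whose divisor is `P` plus zeros
of `B`, so the zeros of `B` generate the group of points.

Take `Q = X³ - 4X + 1` and for `B` the product of the `X - 2i` over `i < m`: the group is generated
by the `m` points `(2i, 1)`. They are independent because there is no 2-torsion and no sum over a
nonempty set of these points is divisible by 2. Halving a point amounts to a monic equation for the
abscissa, so a solution in `ℚ(T)` is a polynomial and specialises at `T = 0` to a rational, hence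
integral, solution, which is excluded by a congruence.
-/

namespace PencilRank

section InvertibleIdeals

open scoped nonZeroDivisors

variable {R K : Type*} [CommRing R] [Field K] [Algebra R K] [IsFractionRing R K]

lemma dvd_of_le_of_isUnit_coeIdeal {I J : Ideal R} (hI : IsUnit (I : FractionalIdeal R⁰ K))
    (h : J ≤ I) : I ∣ J := by
  obtain ⟨u, hu⟩ := hI
  have hle : ↑u⁻¹ * (J : FractionalIdeal R⁰ K) ≤ 1 :=
    calc ↑u⁻¹ * (J : FractionalIdeal R⁰ K)
      _ ≤ ↑u⁻¹ * I := mul_le_mul_right ((FractionalIdeal.coeIdeal_le_coeIdeal K).mpr h) _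
      _ = 1 := by rw [← hu, Units.inv_mul]
  obtain ⟨J', hJ'⟩ := FractionalIdeal.le_one_iff_exists_coeIdeal.mp hle
  refine ⟨J', FractionalIdeal.coeIdeal_injective (K := K) ?_⟩
  simp only [FractionalIdeal.coeIdeal_mul, hJ', ← hu, Units.mul_inv_cancel_left]

lemma le_of_mul_le_mul_of_isUnit_coeIdeal {I J₁ J₂ : Ideal R}
    (hI : IsUnit (I : FractionalIdeal R⁰ K)) (h : I * J₁ ≤ I * J₂) : J₁ ≤ J₂ := by
  obtain ⟨u, hu⟩ := hI
  rw [← FractionalIdeal.coeIdeal_le_coeIdeal K] at h ⊢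
  rw [FractionalIdeal.coeIdeal_mul, FractionalIdeal.coeIdeal_mul, ← hu] at h
  have hle := mul_le_mul_right h (↑u⁻¹ : FractionalIdeal R⁰ K)
  simpa only [Units.inv_mul_cancel_left] using hle

lemma exists_le_prod_map_eq_of_prod_map_le {ι : Type*} {f : ι → Ideal R}
    (hunit : ∀ i, IsUnit (f i : FractionalIdeal R⁰ K)) (hmax : ∀ i, f i = ⊤ ∨ (f i).IsMaximal)
    (s : Multiset ι) {J : Ideal R} (hJ : (s.map f).prod ≤ J) :
    ∃ t ≤ s, (t.map f).prod = J := by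
  induction s using Multiset.induction generalizing J with
  | empty => exact ⟨0, le_rfl, hJ.antisymm (by simp)⟩
  | cons i s ih =>
    rw [Multiset.map_cons, Multiset.prod_cons] at hJ
    by_cases hJi : J ≤ f i
    · obtain ⟨J', rfl⟩ := dvd_of_le_of_isUnit_coeIdeal (hunit i) hJi
      obtain ⟨t, hts, ht⟩ := ih (le_of_mul_le_mul_of_isUnit_coeIdeal (hunit i) hJ)
      refine ⟨i ::ₘ t, Multiset.cons_le_cons i hts, ?_⟩
      rw [Multiset.map_cons, Multiset.prod_cons, ht]
    · have hsup : f i ⊔ J = ⊤ := by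
        rcases hmax i with h | h
        · rw [h, top_sup_eq]
        · exact h.out.2 _ (left_lt_sup.mpr hJi)
      have hsJ : (s.map f).prod ≤ J :=
        calc (s.map f).prod
          _ = f i * (s.map f).prod ⊔ J * (s.map f).prod := by
            rw [← Ideal.sup_mul, hsup, Ideal.top_mul]
          _ ≤ J := sup_le hJ Ideal.mul_le_left
      obtain ⟨t, hts, ht⟩ := ih hsJ
      exact ⟨t, hts.trans (Multiset.le_cons_self s i), ht⟩

end InvertibleIdeals

section PointIdeals

open WeierstrassCurve.Affine
open scoped nonZeroDivisors

variable {F : Type*} [Field F] {W : WeierstrassCurve.Affine F}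

/-- The ideal of functions in the affine coordinate ring vanishing at a point; it is the unit ideal
for the point at infinity. -/
def pointIdeal : W.Point → Ideal W.CoordinateRing
  | .zero => ⊤
  | .some x y _ => CoordinateRing.XYIdeal W x (C y)

/-- `pointIdeal` as an invertible fractional ideal. -/
def pointUnit : W.Point → (FractionalIdeal W.CoordinateRing⁰ W.FunctionField)ˣ
  | .zero => 1
  | .some _ _ h => CoordinateRing.XYIdeal' h

lemma coe_pointUnit (P : W.Point) :
    (pointUnit P : FractionalIdeal W.CoordinateRing⁰ W.FunctionField) = pointIdeal P := by
  cases P with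
  | zero => simp [pointUnit, pointIdeal]
  | some => rfl

lemma isUnit_coe_pointIdeal (P : W.Point) :
    IsUnit (pointIdeal P : FractionalIdeal W.CoordinateRing⁰ W.FunctionField) :=
  ⟨pointUnit P, coe_pointUnit P⟩

lemma toClass_eq_mk_pointUnit (P : W.Point) :
    Point.toClass P = Additive.ofMul (ClassGroup.mk W.FunctionField (pointUnit P)) := by
  cases P with
  | zero => rw [pointUnit, map_one]; rfl
  | some => rfl

lemma pointIdeal_injective : Function.Injective (pointIdeal (W := W)) := by
  intro P Q h
  apply Point.toClass_injective
  have hu : pointUnit P = pointUnit Q := Units.ext (by rw [coe_pointUnit, coe_pointUnit, h])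
  rw [toClass_eq_mk_pointUnit, toClass_eq_mk_pointUnit, hu]

lemma isMaximal_pointIdeal_some {x y : F} (h : W.Nonsingular x y) :
    (pointIdeal (.some x y h)).IsMaximal :=
  Ideal.Quotient.maximal_of_isField _ <|
    (CoordinateRing.quotientXYIdealEquiv (y := C y) h.1).toMulEquiv.isField (Field.toIsField F)

lemma pointIdeal_eq_top_or_isMaximal (P : W.Point) :
    pointIdeal P = ⊤ ∨ (pointIdeal P).IsMaximal := by
  cases P with
  | zero => exact .inl rfl
  | some x y h => exact .inr (isMaximal_pointIdeal_some h)

lemma pointIdeal_neg_mul_pointIdeal {x y : F} (h : W.Nonsingular x y) :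
    pointIdeal (-.some x y h) * pointIdeal (.some x y h) = CoordinateRing.XIdeal W x := by
  rw [Point.neg_some]
  exact CoordinateRing.XYIdeal_neg_mul h

lemma mk_mem_pointIdeal_some {x y : F} (h : W.Nonsingular x y) (f : F[X][X]) :
    CoordinateRing.mk W f ∈ pointIdeal (.some x y h) ↔ f.evalEval x y = 0 := by
  have hle : pointIdeal (.some x y h) ≤ RingHom.ker (AdjoinRoot.evalEval h.1) := by
    refine Ideal.span_le.mpr ?_
    rintro _ (rfl | rfl)
    · exact (AdjoinRoot.evalEval_mk h.1 _).trans (by simp [evalEval])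
    · exact (AdjoinRoot.evalEval_mk h.1 _).trans (by simp)
  rw [(isMaximal_pointIdeal_some h).eq_of_le (RingHom.ker_ne_top _) hle, RingHom.mem_ker]
  exact Eq.congr_left (AdjoinRoot.evalEval_mk h.1 f)

lemma sum_eq_zero_of_prod_pointIdeal_eq_span {s : Multiset W.Point} {γ : W.CoordinateRing}
    (hγ : γ ≠ 0) (h : (s.map pointIdeal).prod = Ideal.span {γ}) : s.sum = 0 := by
  have hcoe : ((s.map pointUnit).prod : FractionalIdeal W.CoordinateRing⁰ W.FunctionField) =
      ((s.map pointIdeal).prod : Ideal W.CoordinateRing) := by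
    clear h
    induction s using Multiset.induction with
    | empty => simp
    | cons P s ih => simp [ih, coe_pointUnit]
  have hclass : Point.toClass s.sum =
      Additive.ofMul (ClassGroup.mk W.FunctionField (s.map pointUnit).prod) := by
    clear h hcoe
    induction s using Multiset.induction with
    | empty => simp
    | cons P s ih =>
      rw [Multiset.sum_cons, map_add, ih, toClass_eq_mk_pointUnit, Multiset.map_cons,
        Multiset.prod_cons, map_mul, ofMul_mul]
  rw [← Point.toClass_eq_zero, hclass, (ClassGroup.mk_eq_one_of_coe_ideal hcoe).mpr ⟨γ, hγ, h⟩]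
  rfl

end PointIdeals

section BivariatePrimes

lemma isPrincipal_of_isPrime_of_not_isMaximal {R : Type*} [CommRing R] [IsDomain R]
    [UniqueFactorizationMonoid R] (hdim : ringKrullDim R ≤ 2) {p : Ideal R} [p.IsPrime]
    (hp : ¬ p.IsMaximal) : p.IsPrincipal := by
  obtain ⟨M, hM, hpM⟩ := p.exists_le_maximal Ideal.IsPrime.ne_top'
  have hlt : p < M := hpM.lt_of_ne (by rintro rfl; exact hp hM)
  have hle : p.height + 1 ≤ 1 + 1 := by
    have hM2 : (M.height : WithBot ℕ∞) ≤ (2 : ℕ∞) :=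
      (Ideal.height_le_ringKrullDim_of_ne_top hM.ne_top).trans hdim
    rw [one_add_one_eq_two]
    exact (Ideal.height_add_one_le_of_lt_of_isPrime hlt).trans (WithBot.coe_le_coe.mp hM2)
  rcases Order.le_one_iff.mp ((ENat.add_le_add_iff_right ENat.one_ne_top).mp hle) with h0 | h1
  · rw [Ideal.height_eq_zero_iff_eq_bot.mp h0]
    exact bot_isPrincipal
  · exact UniqueFactorizationMonoid.isPrincipal_of_height_eq_one h1

lemma isPrincipal_ker_of_transcendental {k K : Type*} [Field k] [CommRing K] [IsDomain K]
    [Algebra k K] (θ : k[X][X] →ₐ[k] K) {f : k[X][X]} (hf : Transcendental k (θ f)) :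
    (RingHom.ker θ).IsPrincipal := by
  have hprime : (RingHom.ker θ).IsPrime := RingHom.ker_isPrime θ
  refine isPrincipal_of_isPrime_of_not_isMaximal ?_ fun hmax ↦ hf ?_
  · rw [ringKrullDim_of_isNoetherianRing, ringKrullDim_of_isNoetherianRing,
      ringKrullDim_eq_zero_of_field, zero_add, one_add_one_eq_two]
  · let := Ideal.Quotient.field (RingHom.ker θ)
    have hfin : Module.Finite k (k[X][X] ⧸ RingHom.ker θ) :=
      finite_of_finite_type_of_isJacobsonRing k _
    have halg : IsAlgebraic k (Ideal.Quotient.mk (RingHom.ker θ) f) :=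
      Algebra.IsAlgebraic.isAlgebraic _
    exact halg.algHom (Ideal.kerLiftAlg θ)

end BivariatePrimes

section Fractions

variable {A R : Type*} [CommRing A] [CommRing R]

/-- The elements of `R` that are fractions of elements of the image of `φ` with denominator dividing
a power of `b`. Membership is expressed without division, so `R` need not contain inverses. -/
def fractionSubring (φ : A →+* R) (b : R) : Subring R where
  carrier := {r | ∃ d n : A, (∃ m, φ d ∣ b ^ m) ∧ φ d * r = φ n}
  mul_mem' := by
    rintro r s ⟨d₁, n₁, ⟨m₁, h₁⟩, e₁⟩ ⟨d₂, n₂, ⟨m₂, h₂⟩, e₂⟩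
    refine ⟨d₁ * d₂, n₁ * n₂, ⟨m₁ + m₂, ?_⟩, ?_⟩
    · rw [map_mul, pow_add]
      exact mul_dvd_mul h₁ h₂
    · rw [map_mul, map_mul, ← e₁, ← e₂, mul_mul_mul_comm]
  one_mem' := ⟨1, 1, ⟨0, by simp⟩, mul_one _⟩
  add_mem' := by
    rintro r s ⟨d₁, n₁, ⟨m₁, h₁⟩, e₁⟩ ⟨d₂, n₂, ⟨m₂, h₂⟩, e₂⟩
    refine ⟨d₁ * d₂, d₂ * n₁ + d₁ * n₂, ⟨m₁ + m₂, ?_⟩, ?_⟩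
    · rw [map_mul, pow_add]
      exact mul_dvd_mul h₁ h₂
    · simp only [map_mul, map_add, ← e₁, ← e₂]
      ring
  zero_mem' := ⟨1, 0, ⟨0, by simp⟩, by simp⟩
  neg_mem' := by
    rintro r ⟨d, n, hd, e⟩
    exact ⟨d, -n, hd, by rw [mul_neg, e, map_neg]⟩

variable {φ : A →+* R} {b : R}

lemma map_mem_fractionSubring (a : A) : φ a ∈ fractionSubring φ b :=
  ⟨1, a, ⟨0, by simp⟩, by simp⟩

lemma mem_fractionSubring_of_mul_eq_one {r s : R} (hr : r ∈ fractionSubring φ b)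
    (hrs : r * s = 1) : s ∈ fractionSubring φ b := by
  obtain ⟨d, n, ⟨m, hm⟩, e⟩ := hr
  have hnd : φ n * s = φ d := by rw [← e, mul_assoc, hrs, mul_one]
  exact ⟨n, d, ⟨m, (Dvd.intro s hnd).trans hm⟩, hnd⟩

lemma exists_dvd_pow_mul_of_mem_fractionSubring {M : Ideal R} {g : A}
    (hg : M.comap φ = Ideal.span {g}) {r : R} (hrM : r ∈ M) (hr : r ∈ fractionSubring φ b) :
    ∃ m, φ g ∣ b ^ m * r := by
  obtain ⟨d, n, ⟨m, e, hm⟩, hdr⟩ := hr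
  have hn : n ∈ M.comap φ := by
    rw [Ideal.mem_comap, ← hdr]
    exact M.mul_mem_left _ hrM
  obtain ⟨q, rfl⟩ := Ideal.mem_span_singleton.mp (hg ▸ hn)
  exact ⟨m, φ q * e, by rw [hm, mul_right_comm, hdr, map_mul, mul_assoc]⟩

lemma map_ratFunc_mem_fractionSubring {k : Type*} [Field k] (ι : RatFunc k →+* R)
    (hC : ∀ a, ι (RatFunc.C a) ∈ fractionSubring φ b) (hX : ι RatFunc.X ∈ fractionSubring φ b)
    (c : RatFunc k) : ι c ∈ fractionSubring φ b := by
  have hpoly (p : k[X]) : ι (algebraMap k[X] (RatFunc k) p) ∈ fractionSubring φ b := by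
    induction p using Polynomial.induction_on' with
    | add p q hp hq => simpa only [map_add] using add_mem hp hq
    | monomial n a =>
      rw [← C_mul_X_pow_eq_monomial, map_mul, map_pow, RatFunc.algebraMap_C,
        RatFunc.algebraMap_X, map_mul, map_pow]
      exact mul_mem (hC a) (pow_mem hX n)
  have hdenom : algebraMap k[X] (RatFunc k) c.denom ≠ 0 :=
    RatFunc.algebraMap_ne_zero c.denom_ne_zero
  rw [← RatFunc.num_div_denom c, div_eq_mul_inv, map_mul]
  refine mul_mem (hpoly _) (mem_fractionSubring_of_mul_eq_one (hpoly c.denom) ?_)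
  rw [← map_mul, mul_inv_cancel₀ hdenom, map_one]

end Fractions

section Pencils

open WeierstrassCurve.Affine

variable {k : Type*} [Field k] {W : WeierstrassCurve.Affine (RatFunc k)} {F B : k[X][X]}

/-- The restriction to a curve over `k(T)` of polynomials in two variables with coefficients in `k`.
A relation `bivariateMap W F = T * bivariateMap W B` says that `W` is the generic member of the
pencil `F = T * B`. -/
def bivariateMap (W : WeierstrassCurve.Affine (RatFunc k)) : k[X][X] →+* W.CoordinateRing :=
  (CoordinateRing.mk W).comp (mapRingHom (mapRingHom RatFunc.C))

lemma evalEval_map_mapRingHom_C (x y : RatFunc k) (f : k[X][X]) :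
    (f.map (mapRingHom RatFunc.C)).evalEval x y = aevalAeval x y f := by
  have hcomp : (evalEvalRingHom x y).comp (mapRingHom (mapRingHom RatFunc.C)) =
      (aevalAeval (R := k) x y : k[X][X] →+* RatFunc k) := by
    ext
    · simp
    · simp
    · simp
  exact RingHom.congr_fun hcomp f

lemma bivariateMap_mem_pointIdeal_some {x y : RatFunc k} (h : W.Nonsingular x y) (f : k[X][X]) :
    bivariateMap W f ∈ pointIdeal (.some x y h) ↔ aevalAeval x y f = 0 :=
  (mk_mem_pointIdeal_some h _).trans (Eq.congr_left (evalEval_map_mapRingHom_C x y f))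

lemma aevalAeval_eq_X_mul (hFB : bivariateMap W F = algebraMap (RatFunc k) _ RatFunc.X *
    bivariateMap W B) {x y : RatFunc k} (h : W.Nonsingular x y) :
    aevalAeval x y F = RatFunc.X * aevalAeval x y B := by
  have hzero : CoordinateRing.mk W (F.map (mapRingHom RatFunc.C) -
      C (C RatFunc.X) * B.map (mapRingHom RatFunc.C)) = 0 := by
    rw [map_sub, map_mul, sub_eq_zero]
    exact hFB
  have hmem := (mk_mem_pointIdeal_some h _).mp (hzero ▸ Ideal.zero_mem _)
  rw [evalEval_sub, evalEval_mul, evalEval_C, eval_C, evalEval_map_mapRingHom_C,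
    evalEval_map_mapRingHom_C] at hmem
  exact sub_eq_zero.mp hmem

lemma isPrincipal_comap_pointIdeal (hFB : bivariateMap W F = algebraMap (RatFunc k) _ RatFunc.X *
    bivariateMap W B) {x y : RatFunc k} (h : W.Nonsingular x y)
    (hB : bivariateMap W B ∉ pointIdeal (.some x y h)) :
    ((pointIdeal (.some x y h)).comap (bivariateMap W)).IsPrincipal := by
  rw [bivariateMap_mem_pointIdeal_some] at hB
  have hker : (pointIdeal (.some x y h)).comap (bivariateMap W) =
      RingHom.ker (aevalAeval (R := k) x y) :=
    Ideal.ext (bivariateMap_mem_pointIdeal_some h)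
  rw [hker]
  by_cases hF : Transcendental k (aevalAeval x y F)
  · exact isPrincipal_ker_of_transcendental _ hF
  · refine isPrincipal_ker_of_transcendental _ (f := B) fun hBalg ↦ ?_
    have hdiv : RatFunc.X = aevalAeval x y F / aevalAeval x y B :=
      eq_div_of_mul_eq hB (aevalAeval_eq_X_mul hFB h).symm
    refine RatFunc.transcendental_X (K := k) ?_
    rw [hdiv, div_eq_mul_inv]
    exact IsAlgebraic.mul (not_not.mp hF) (IsAlgebraic.inv hBalg)

lemma algebraMap_mem_fractionSubring_bivariateMap (hFB : bivariateMap W F =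
    algebraMap (RatFunc k) _ RatFunc.X * bivariateMap W B) (c : RatFunc k) :
    algebraMap (RatFunc k) W.CoordinateRing c ∈
      fractionSubring (bivariateMap W) (bivariateMap W B) := by
  refine map_ratFunc_mem_fractionSubring _ (fun a ↦ ?_) ?_ c
  · have hCC : algebraMap (RatFunc k) W.CoordinateRing (RatFunc.C a) =
        bivariateMap W (C (C a)) := by
      rw [bivariateMap, RingHom.comp_apply, coe_mapRingHom, map_C, coe_mapRingHom, map_C]
      rfl
    exact hCC ▸ map_mem_fractionSubring _
  · exact ⟨B, F, ⟨1, by rw [pow_one]⟩, by rw [hFB, mul_comm]⟩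

lemma XClass_mem_fractionSubring_bivariateMap (hFB : bivariateMap W F =
    algebraMap (RatFunc k) _ RatFunc.X * bivariateMap W B) (x : RatFunc k) :
    CoordinateRing.XClass W x ∈ fractionSubring (bivariateMap W) (bivariateMap W B) := by
  have hX : CoordinateRing.XClass W x = bivariateMap W (C X) - algebraMap _ _ x := by
    rw [CoordinateRing.XClass, C_sub, map_sub, bivariateMap, RingHom.comp_apply, coe_mapRingHom,
      map_C, coe_mapRingHom, map_X]
    rfl
  rw [hX]
  exact sub_mem (map_mem_fractionSubring _) (algebraMap_mem_fractionSubring_bivariateMap hFB x)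

lemma YClass_mem_fractionSubring_bivariateMap (hFB : bivariateMap W F =
    algebraMap (RatFunc k) _ RatFunc.X * bivariateMap W B) (y : RatFunc k) :
    CoordinateRing.YClass W (C y) ∈ fractionSubring (bivariateMap W) (bivariateMap W B) := by
  have hY : CoordinateRing.YClass W (C y) = bivariateMap W X - algebraMap _ _ y := by
    rw [CoordinateRing.YClass, map_sub, bivariateMap, RingHom.comp_apply, coe_mapRingHom, map_X]
    rfl
  rw [hY]
  exact sub_mem (map_mem_fractionSubring _) (algebraMap_mem_fractionSubring_bivariateMap hFB y)

lemma exists_span_pow_mul_pointIdeal_le (hFB : bivariateMap W F =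
    algebraMap (RatFunc k) _ RatFunc.X * bivariateMap W B) {P : W.Point}
    (hB : bivariateMap W B ∉ pointIdeal P) :
    ∃ γ ≠ 0, γ ∈ pointIdeal P ∧
      ∃ m, Ideal.span {bivariateMap W B ^ m} * pointIdeal P ≤ Ideal.span {γ} := by
  cases P with
  | zero => exact absurd Submodule.mem_top hB
  | some x y h =>
    obtain ⟨g, hg⟩ := isPrincipal_comap_pointIdeal hFB h hB
    have hXmem : CoordinateRing.XClass W x ∈ pointIdeal (.some x y h) :=
      Ideal.subset_span (by simp)
    have hYmem : CoordinateRing.YClass W (C y) ∈ pointIdeal (.some x y h) :=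
      Ideal.subset_span (by simp)
    obtain ⟨m, hm⟩ := exists_dvd_pow_mul_of_mem_fractionSubring hg hXmem
      (XClass_mem_fractionSubring_bivariateMap hFB x)
    obtain ⟨n, hn⟩ := exists_dvd_pow_mul_of_mem_fractionSubring hg hYmem
      (YClass_mem_fractionSubring_bivariateMap hFB y)
    refine ⟨bivariateMap W g, ?_, Ideal.mem_comap.mp (hg ▸ Ideal.mem_span_singleton_self g),
      m + n, ?_⟩
    · intro hg0
      rw [hg0, zero_dvd_iff] at hm
      have hb0 : bivariateMap W B ≠ 0 := fun hb ↦ hB (hb ▸ Ideal.zero_mem _)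
      exact mul_ne_zero (pow_ne_zero m hb0) (CoordinateRing.XClass_ne_zero x) hm
    · rw [pointIdeal, CoordinateRing.XYIdeal, Ideal.span_mul_span', Ideal.span_le]
      rintro _ ⟨_, rfl, _, rfl | rfl, rfl⟩ <;>
        rw [SetLike.mem_coe, Ideal.mem_span_singleton]
      · simpa only [pow_add, mul_assoc, mul_left_comm] using hm.mul_left (bivariateMap W B ^ n)
      · simpa only [pow_add, mul_assoc] using hn.mul_left (bivariateMap W B ^ m)

lemma mem_of_prod_pointIdeal_eq_span {s : Multiset W.Point} {b : W.CoordinateRing}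
    (hs : (s.map pointIdeal).prod = Ideal.span {b}) {P : W.Point} (hP : P ≠ 0)
    (hb : b ∈ pointIdeal P) : P ∈ s := by
  cases P with
  | zero => exact absurd rfl hP
  | some x y h =>
    have hmax := isMaximal_pointIdeal_some h
    obtain ⟨Q, hQs, hQP⟩ := (Ideal.IsPrime.multiset_prod_map_le (pointIdeal (W := W))
      hmax.isPrime).mp (hs.trans_le ((Ideal.span_singleton_le_iff_mem _).mpr hb))
    rcases pointIdeal_eq_top_or_isMaximal Q with hQ | hQ
    · exact absurd (top_unique (hQ ▸ hQP)) hmax.ne_top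
    · rwa [← pointIdeal_injective (hQ.eq_of_le hmax.ne_top hQP)]

-- A generator of the contraction of the ideal of `P` to `k[X, Y]` has divisor `(P)` plus zeros
-- of `B`, so the class of `P` is minus a sum of classes of zeros of `B`.
theorem closure_eq_top_of_prod_pointIdeal (hFB : bivariateMap W F =
    algebraMap (RatFunc k) _ RatFunc.X * bivariateMap W B) {s : Multiset W.Point}
    (hs : (s.map pointIdeal).prod = Ideal.span {bivariateMap W B}) :
    AddSubgroup.closure {P | P ∈ s} = ⊤ := by
  refine (AddSubgroup.eq_top_iff' _).mpr fun P ↦ ?_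
  rcases eq_or_ne P 0 with rfl | hP
  · exact zero_mem _
  by_cases hB : bivariateMap W B ∈ pointIdeal P
  · exact AddSubgroup.subset_closure (mem_of_prod_pointIdeal_eq_span hs hP hB)
  obtain ⟨γ, hγ0, hγP, m, hm⟩ := exists_span_pow_mul_pointIdeal_le hFB hB
  obtain ⟨J, hJ⟩ := dvd_of_le_of_isUnit_coeIdeal (isUnit_coe_pointIdeal P)
    ((Ideal.span_singleton_le_iff_mem _).mpr hγP)
  have hprod : ((m • s).map pointIdeal).prod ≤ J := by
    rw [Multiset.map_nsmul, Multiset.prod_nsmul, hs, Ideal.span_singleton_pow]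
    rw [hJ, mul_comm] at hm
    exact le_of_mul_le_mul_of_isUnit_coeIdeal (isUnit_coe_pointIdeal P) hm
  obtain ⟨t, hts, rfl⟩ := exists_le_prod_map_eq_of_prod_map_le isUnit_coe_pointIdeal
    pointIdeal_eq_top_or_isMaximal _ hprod
  have hsum : P + t.sum = 0 := by
    rw [← Multiset.sum_cons]
    refine sum_eq_zero_of_prod_pointIdeal_eq_span hγ0 ?_
    rw [Multiset.map_cons, Multiset.prod_cons, hJ]
  rw [eq_neg_of_add_eq_zero_left hsum]
  refine neg_mem (AddSubgroup.multiset_sum_mem _ _ fun Q hQ ↦ AddSubgroup.subset_closure ?_)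
  exact Multiset.mem_of_mem_nsmul (Multiset.mem_of_le hts hQ)

end Pencils

section Rank

variable {A ι : Type*} [AddCommGroup A] {v : ι → A}

lemma even_and_sum_half_zsmul_eq_zero [Fintype ι] (htors : ∀ a : A, 2 • a = 0 → a = 0)
    (hv : ∀ s : Finset ι, s.Nonempty → ∀ a : A, 2 • a ≠ ∑ i ∈ s, v i) {g : ι → ℤ}
    (hg : ∑ i, g i • v i = 0) : (∀ i, Even (g i)) ∧ ∑ i, (g i / 2) • v i = 0 := by
  have hsplit : 2 • ∑ i, (g i / 2) • v i + ∑ i with Odd (g i), v i = 0 := by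
    rw [← hg, Finset.sum_filter, Finset.smul_sum, ← Finset.sum_add_distrib]
    refine Finset.sum_congr rfl fun i _ ↦ ?_
    split_ifs with hodd
    · nth_rw 2 [← Int.two_mul_ediv_two_add_one_of_odd hodd]
      rw [add_smul, one_smul, mul_smul, two_smul, two_smul]
    · nth_rw 2 [← Int.two_mul_ediv_two_of_even (Int.not_odd_iff_even.mp hodd)]
      rw [add_zero, mul_smul, two_smul, two_smul]
  have hempty : Finset.univ.filter (fun i ↦ Odd (g i)) = ∅ := by
    by_contra hne
    refine hv _ (Finset.nonempty_iff_ne_empty.mpr hne) (-∑ i, (g i / 2) • v i) ?_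
    rw [smul_neg, neg_eq_of_add_eq_zero_right hsplit]
  rw [hempty, Finset.sum_empty, add_zero] at hsplit
  rw [Finset.filter_eq_empty_iff] at hempty
  exact ⟨fun i ↦ Int.not_odd_iff_even.mp (hempty (Finset.mem_univ i)), htors _ hsplit⟩

lemma linearIndependent_int_of_two_nsmul_ne_sum [Finite ι] (htors : ∀ a : A, 2 • a = 0 → a = 0)
    (hv : ∀ s : Finset ι, s.Nonempty → ∀ a : A, 2 • a ≠ ∑ i ∈ s, v i) :
    LinearIndependent ℤ v := by
  cases nonempty_fintype ι
  have hdvd (n : ℕ) : ∀ g : ι → ℤ, ∑ i, g i • v i = 0 → ∀ i, (2 : ℤ) ^ n ∣ g i := by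
    induction n with
    | zero => simp
    | succ n ih =>
      intro g hg i
      obtain ⟨heven, hsum⟩ := even_and_sum_half_zsmul_eq_zero htors hv hg
      rw [← Int.two_mul_ediv_two_of_even (heven i), pow_succ']
      exact mul_dvd_mul_left 2 (ih _ hsum i)
  rw [Fintype.linearIndependent_iff]
  intro g hg i
  refine Int.eq_zero_of_abs_lt_dvd (hdvd (g i).natAbs g hg i) ?_
  rw [Int.abs_eq_natAbs]
  exact_mod_cast Nat.lt_two_pow_self

lemma finrank_tensorProduct_eq_card [Fintype ι] (hli : LinearIndependent ℤ v)
    (hgen : AddSubgroup.closure (Set.range v) = ⊤) :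
    Module.finrank ℚ (ℚ ⊗[ℤ] A) = Fintype.card ι := by
  have hspan : Submodule.span ℤ (Set.range v) = ⊤ := by
    rw [← Submodule.toAddSubgroup_inj, Submodule.span_int_eq_addSubgroupClosure, hgen,
      Submodule.top_toAddSubgroup]
  let basis := Module.Basis.mk hli hspan.ge
  have : Module.Free ℤ A := .of_basis basis
  rw [Module.finrank_baseChange, Module.finrank_eq_card_basis basis]

end Rank

section Halving

open WeierstrassCurve.Affine

variable {F : Type*} [Field F] {W : WeierstrassCurve.Affine F}

lemma eval_Ψ₂Sq_of_equation {x y : F} (h : W.Equation x y) :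
    (WeierstrassCurve.Ψ₂Sq W).eval x = (y - W.negY x y) ^ 2 := by
  rw [equation_iff] at h
  simp only [WeierstrassCurve.Ψ₂Sq, WeierstrassCurve.b₂, WeierstrassCurve.b₄, WeierstrassCurve.b₆,
    negY, eval_add, eval_mul, eval_C, eval_pow, eval_X]
  linear_combination -4 * h

lemma eq_zero_of_two_nsmul_eq_zero (hroot : ∀ x, ¬ (WeierstrassCurve.Ψ₂Sq W).IsRoot x)
    {P : W.Point} (hP : 2 • P = 0) : P = 0 := by
  rw [two_nsmul] at hP
  cases P with
  | zero => rfl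
  | some x y h =>
    have hy : y ≠ W.negY x y := by
      intro hy
      refine hroot x ?_
      rw [IsRoot.def, eval_Ψ₂Sq_of_equation h.1, sub_eq_zero.mpr hy, zero_pow two_ne_zero]
    rw [Point.add_self_of_Y_ne hy] at hP
    exact absurd hP (Point.some_ne_zero _)

lemma addX_mul_sq_eq_eval_Φ_two {x y : F} (h : W.Equation x y) (hy : y ≠ W.negY x y) :
    W.addX x x (W.slope x x y y) * (y - W.negY x y) ^ 2 = (WeierstrassCurve.Φ W 2).eval x := by
  have hslope : W.slope x x y y * (y - W.negY x y) =
      3 * x ^ 2 + 2 * W.a₂ * x + W.a₄ - W.a₁ * y := by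
    rw [slope_of_Y_ne rfl hy, div_mul_cancel₀ _ (sub_ne_zero.mpr hy)]
  rw [equation_iff] at h
  simp only [addX, negY, WeierstrassCurve.Φ_two, WeierstrassCurve.b₄, WeierstrassCurve.b₆,
    WeierstrassCurve.b₈, eval_sub, eval_mul, eval_C, eval_pow, eval_X] at hslope ⊢
  linear_combination (W.slope x x y y * (2 * y + W.a₁ * x + W.a₃) + (3 * x ^ 2 + 2 * W.a₂ * x +
    W.a₄ - W.a₁ * y) + W.a₁ * (2 * y + W.a₁ * x + W.a₃)) * hslope -
    (W.a₁ ^ 2 + 4 * W.a₂ + 8 * x) * h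

/-- The polynomial in `x` whose roots are the abscissas of the affine points `P` such that `2 • P`
has abscissa `x₀`. -/
def halvingPolynomial {R : Type*} [CommRing R] (W : WeierstrassCurve R) (x₀ : R) : R[X] :=
  W.Φ 2 - C x₀ * W.Ψ₂Sq

lemma halvingPolynomial_map {R S : Type*} [CommRing R] [CommRing S] (W : WeierstrassCurve R)
    (x₀ : R) (π : R →+* S) :
    halvingPolynomial (W.map π) (π x₀) = (halvingPolynomial W x₀).map π := by
  simp only [halvingPolynomial, WeierstrassCurve.map_Φ, WeierstrassCurve.map_Ψ₂Sq,
    Polynomial.map_sub, Polynomial.map_mul, map_C]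

lemma monic_halvingPolynomial {R : Type*} [CommRing R] (W : WeierstrassCurve R) (x₀ : R) :
    (halvingPolynomial W x₀).Monic := by
  nontriviality R
  refine Monic.sub_of_left (W.leadingCoeff_Φ 2) (degree_lt_degree ?_)
  rw [W.natDegree_Φ]
  exact (natDegree_C_mul_le _ _).trans_lt (W.natDegree_Ψ₂Sq_le.trans_lt (by decide))

lemma two_nsmul_ne_some {x₀ y₀ : F} (h₀ : W.Nonsingular x₀ y₀)
    (hroot : ∀ x, ¬ (halvingPolynomial W x₀).IsRoot x) (P : W.Point) : 2 • P ≠ .some x₀ y₀ h₀ := by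
  rw [two_nsmul]
  intro hP
  cases P with
  | zero => exact Point.some_ne_zero h₀ (hP.symm.trans (add_zero 0))
  | some x y h =>
    rcases eq_or_ne y (W.negY x y) with hy | hy
    · exact Point.some_ne_zero h₀ (hP.symm.trans (Point.add_self_of_Y_eq hy))
    · rw [Point.add_self_of_Y_ne hy, Point.some.injEq] at hP
      refine hroot x ?_
      rw [IsRoot.def, halvingPolynomial, eval_sub, eval_mul, eval_C, eval_Ψ₂Sq_of_equation h.1,
        ← hP.1, addX_mul_sq_eq_eval_Φ_two h.1 hy, sub_self]

end Halving

section Specialization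

lemma exists_isRoot_map_of_isRoot_map {D K L : Type*} [CommRing D] [IsDomain D]
    [IsIntegrallyClosed D] [Field K] [Algebra D K] [IsFractionRing D K] [CommRing L] (π : D →+* L)
    {f : D[X]} (hf : f.Monic) {x : K} (hx : (f.map (algebraMap D K)).IsRoot x) :
    ∃ a, (f.map π).IsRoot a := by
  have hint : IsIntegral D x := ⟨f, hf, by rwa [← eval_map]⟩
  obtain ⟨a, rfl⟩ := IsIntegrallyClosed.isIntegral_iff.mp hint
  exact ⟨π a, (hx.of_map (IsFractionRing.injective D K)).map⟩

end Specialization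

section Cubics

open WeierstrassCurve

variable {R S : Type*} [CommRing R] [CommRing S]

/-- The curve `Y² = f(X)` attached to a monic cubic polynomial `f`. Only the coefficients of `f` in
degrees `0`, `1`, `2` are read. -/
def cubicCurve (f : R[X]) : WeierstrassCurve R :=
  ⟨0, f.coeff 2, 0, f.coeff 1, f.coeff 0⟩

lemma cubicCurve_map (f : R[X]) (π : R →+* S) : cubicCurve (f.map π) = (cubicCurve f).map π := by
  ext <;> simp [cubicCurve]

lemma toAffine_polynomial_cubicCurve {f : R[X]} (hf : f.IsMonicOfDegree 3) :
    (cubicCurve f).toAffine.polynomial = X ^ 2 - C f := by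
  have hsum := hf.monic.as_sum
  rw [hf.natDegree_eq] at hsum
  simp only [Finset.sum_range_succ, Finset.sum_range_zero] at hsum
  conv_rhs => rw [hsum]
  simp only [Affine.polynomial, cubicCurve, map_zero, map_add, map_mul, map_pow, pow_zero, map_one]
  ring

lemma equation_cubicCurve {f : R[X]} (hf : f.IsMonicOfDegree 3) (x y : R) :
    (cubicCurve f).toAffine.Equation x y ↔ y ^ 2 = f.eval x := by
  rw [Affine.Equation, toAffine_polynomial_cubicCurve hf, evalEval_sub, evalEval_pow, evalEval_X,
    evalEval_C, sub_eq_zero]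

lemma Ψ₂Sq_cubicCurve {f : R[X]} (hf : f.IsMonicOfDegree 3) : (cubicCurve f).Ψ₂Sq = 4 * f := by
  have hsum := hf.monic.as_sum
  rw [hf.natDegree_eq] at hsum
  simp only [Finset.sum_range_succ, Finset.sum_range_zero] at hsum
  conv_rhs => rw [hsum]
  simp only [Ψ₂Sq, b₂, b₄, b₆, cubicCurve, map_add, map_mul, C_0, map_ofNat, map_pow]
  ring

lemma exists_some_add_some_eq_some_of_Y_eq {F : Type*} [Field F] {f : F[X]} {x₁ x₂ y : F}
    (h₁ : (cubicCurve f).toAffine.Nonsingular x₁ y) (h₂ : (cubicCurve f).toAffine.Nonsingular x₂ y)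
    (hx : x₁ ≠ x₂) : ∃ y' h', Affine.Point.some x₁ y h₁ + .some x₂ y h₂ =
      .some (-f.coeff 2 - x₁ - x₂) y' h' := by
  have hX : (cubicCurve f).toAffine.addX x₁ x₂ ((cubicCurve f).toAffine.slope x₁ x₂ y y) =
      -f.coeff 2 - x₁ - x₂ := by
    rw [Affine.slope_of_X_ne hx, sub_self, zero_div]
    simp only [Affine.addX, cubicCurve]
    ring
  rw [Affine.Point.add_of_X_ne hx, ← hX]
  exact ⟨_, _, rfl⟩

end Cubics

section PencilCurves

open WeierstrassCurve

variable {k : Type*} [Field k] {B Q : k[X]}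

/-- The polynomial `T * B(X) + Q(X)` in `X` with coefficients in `k[T]`. -/
def pencilCubic (B Q : k[X]) : k[X][X] :=
  C X * B.map C + Q.map C

/-- The curve `Y² = T * B(X) + Q(X)` over `k(T)`. -/
def pencilCurve (B Q : k[X]) : WeierstrassCurve (RatFunc k) :=
  cubicCurve ((pencilCubic B Q).map (algebraMap k[X] (RatFunc k)))

lemma coeff_pencilCubic (B Q : ℚ[X]) (i : ℕ) : (pencilCubic B Q).coeff i = alph 0 B Q i := by
  rw [pencilCubic, alph, coeff_add, coeff_C_mul, coeff_map, coeff_map, coeff_zero, C_0]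
  ring

lemma surfW_eq_pencilCurve (B Q : ℚ[X]) : surfW 0 B Q = pencilCurve B Q := by
  simp only [surfW, pencilCurve, cubicCurve, coeff_map, coeff_pencilCubic]

lemma isMonicOfDegree_pencilCubic (hB : B.natDegree < 3) (hQ : Q.IsMonicOfDegree 3) :
    (pencilCubic B Q).IsMonicOfDegree 3 := by
  refine IsMonicOfDegree.add_left ?_ ⟨?_, hQ.monic.map C⟩
  · exact ((natDegree_C_mul_le _ _).trans natDegree_map_le).trans_lt hB
  · rw [hQ.monic.natDegree_map, hQ.natDegree_eq]

lemma map_evalRingHom_zero_pencilCubic (B Q : k[X]) :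
    (pencilCubic B Q).map (evalRingHom 0) = Q := by
  have hC : (evalRingHom (0 : k)).comp C = RingHom.id k := by ext; simp
  simp [pencilCubic, Polynomial.map_map, hC]

lemma map_algebraMap_pencilCubic (B Q : k[X]) :
    (pencilCubic B Q).map (algebraMap k[X] (RatFunc k)) =
      C RatFunc.X * B.map RatFunc.C + Q.map RatFunc.C := by
  simp [pencilCubic, Polynomial.map_map]

lemma Δ_pencilCurve_ne_zero (hΔ : (cubicCurve Q).Δ ≠ 0) : (pencilCurve B Q).Δ ≠ 0 := by
  rw [← map_evalRingHom_zero_pencilCubic B Q, cubicCurve_map, map_Δ] at hΔ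
  rw [pencilCurve, cubicCurve_map, map_Δ]
  exact RatFunc.algebraMap_ne_zero (ne_zero_of_map hΔ)

lemma isMonicOfDegree_map_pencilCubic (hB : B.natDegree < 3) (hQ : Q.IsMonicOfDegree 3) :
    ((pencilCubic B Q).map (algebraMap k[X] (RatFunc k))).IsMonicOfDegree 3 := by
  have h := isMonicOfDegree_pencilCubic hB hQ
  exact ⟨by rw [h.monic.natDegree_map, h.natDegree_eq], h.monic.map _⟩

lemma nonsingular_pencilCurve (hB : B.natDegree < 3) (hQ : Q.IsMonicOfDegree 3)
    (hΔ : (cubicCurve Q).Δ ≠ 0) {x y : k} (hx : B.IsRoot x) (hy : y ^ 2 = Q.eval x) :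
    (pencilCurve B Q).toAffine.Nonsingular (RatFunc.C x) (RatFunc.C y) := by
  rw [← Affine.equation_iff_nonsingular_of_Δ_ne_zero (Δ_pencilCurve_ne_zero hΔ), pencilCurve,
    equation_cubicCurve (isMonicOfDegree_map_pencilCubic hB hQ), map_algebraMap_pencilCubic,
    eval_add, eval_mul, eval_map_apply, eval_map_apply, hx, map_zero, mul_zero, zero_add, ← hy,
    map_pow]

lemma bivariateMap_pencilCurve (hB : B.natDegree < 3) (hQ : Q.IsMonicOfDegree 3) :
    bivariateMap (pencilCurve B Q) (X ^ 2 - C Q) =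
      algebraMap (RatFunc k) _ RatFunc.X * bivariateMap (pencilCurve B Q) (C B) := by
  have hpoly : (pencilCurve B Q).toAffine.polynomial =
      (X ^ 2 - C Q).map (mapRingHom RatFunc.C) -
        C (C RatFunc.X) * (C B).map (mapRingHom RatFunc.C) := by
    rw [pencilCurve, toAffine_polynomial_cubicCurve (isMonicOfDegree_map_pencilCubic hB hQ),
      map_algebraMap_pencilCubic]
    simp only [Polynomial.map_sub, Polynomial.map_pow, map_X, map_C, coe_mapRingHom, map_add,
      map_mul]
    ring
  have hzero := congrArg (Affine.CoordinateRing.mk (pencilCurve B Q)) hpoly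
  rw [map_sub, map_mul] at hzero
  exact sub_eq_zero.mp (hzero.symm.trans AdjoinRoot.mk_self)

lemma eq_zero_of_two_nsmul_eq_zero_pencilCurve (h2 : (2 : k) ≠ 0) (hB : B.natDegree < 3)
    (hQ : Q.IsMonicOfDegree 3) (hroot : ∀ x, ¬ Q.IsRoot x) {P : (pencilCurve B Q).toAffine.Point}
    (hP : 2 • P = 0) : P = 0 := by
  refine eq_zero_of_two_nsmul_eq_zero (fun x hx ↦ ?_) hP
  have h4 : (4 : RatFunc k) ≠ 0 := by
    have := (map_ne_zero (RatFunc.C : k →+* RatFunc k)).mpr (mul_ne_zero h2 h2)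
    rwa [map_mul, map_ofNat, show (2 : RatFunc k) * 2 = 4 by norm_num] at this
  rw [pencilCurve, Ψ₂Sq_cubicCurve (isMonicOfDegree_map_pencilCubic hB hQ), IsRoot.def, eval_mul,
    eval_ofNat, mul_eq_zero_iff_left h4] at hx
  obtain ⟨a, ha⟩ := exists_isRoot_map_of_isRoot_map (evalRingHom 0)
    (isMonicOfDegree_pencilCubic hB hQ).monic hx
  exact hroot a (by rwa [map_evalRingHom_zero_pencilCubic] at ha)

lemma two_nsmul_ne_some_pencilCurve {x₀ : k[X]} {x y : RatFunc k}
    (hx₀ : algebraMap k[X] (RatFunc k) x₀ = x) (h : (pencilCurve B Q).toAffine.Nonsingular x y)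
    (hroot : ∀ a, ¬ (halvingPolynomial (cubicCurve Q) (x₀.eval 0)).IsRoot a)
    (P : (pencilCurve B Q).toAffine.Point) : 2 • P ≠ .some x y h := by
  subst hx₀
  refine two_nsmul_ne_some h (fun x hx ↦ ?_) P
  rw [pencilCurve, cubicCurve_map, halvingPolynomial_map] at hx
  obtain ⟨a, ha⟩ := exists_isRoot_map_of_isRoot_map (evalRingHom 0)
    (monic_halvingPolynomial _ _) hx
  rw [← halvingPolynomial_map, ← cubicCurve_map, map_evalRingHom_zero_pencilCubic] at ha
  exact hroot a ha

end PencilCurves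

section ZerosOfPencil

open WeierstrassCurve.Affine

variable {k ι : Type*} [Field k] [Fintype ι] {B Q : k[X]} {a b : ι → k}

lemma closure_range_some_eq_top (hB : B = ∏ i, (X - C (a i))) (hcard : Fintype.card ι < 3)
    (hQ : Q.IsMonicOfDegree 3)
    (h : ∀ i, (pencilCurve B Q).toAffine.Nonsingular (RatFunc.C (a i)) (RatFunc.C (b i))) :
    AddSubgroup.closure (Set.range fun i ↦ Point.some _ _ (h i)) = ⊤ := by
  have hdeg : B.natDegree < 3 := by rwa [hB, natDegree_finsetProd_X_sub_C_eq_card]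
  let zeros : Multiset (pencilCurve B Q).toAffine.Point :=
    ∑ i, {-.some _ _ (h i), .some _ _ (h i)}
  have hzeros : (zeros.map pointIdeal).prod =
      Ideal.span {bivariateMap (pencilCurve B Q) (C B)} := by
    have hfactor (i : ι) : (Multiset.map pointIdeal {-.some _ _ (h i), .some _ _ (h i)}).prod =
        Ideal.span {bivariateMap (pencilCurve B Q) (C (X - C (a i)))} := by
      rw [Multiset.insert_eq_cons, Multiset.map_cons, Multiset.map_singleton, Multiset.prod_cons,
        Multiset.prod_singleton, pointIdeal_neg_mul_pointIdeal, CoordinateRing.XIdeal,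
        CoordinateRing.XClass, bivariateMap, RingHom.comp_apply, coe_mapRingHom, map_C,
        coe_mapRingHom, Polynomial.map_sub, map_X, map_C]
    rw [← Multiset.coe_mapAddMonoidHom, map_sum, Multiset.prod_sum]
    simp only [Multiset.coe_mapAddMonoidHom, hfactor, Ideal.prod_span_singleton, ← map_prod, ← hB]
  rw [eq_top_iff, ← closure_eq_top_of_prod_pointIdeal (bivariateMap_pencilCurve hdeg hQ) hzeros,
    AddSubgroup.closure_le]
  intro P hP
  obtain ⟨i, -, hi⟩ := Multiset.mem_sum.mp hP
  have hmem := AddSubgroup.subset_closure (Set.mem_range_self (f := fun i ↦ Point.some _ _ (h i)) i)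
  rcases Multiset.mem_cons.mp hi with rfl | hi
  · exact neg_mem hmem
  · rwa [Multiset.mem_singleton.mp hi]

end ZerosOfPencil

section RationalExample

open WeierstrassCurve

/-- The cubic `X³ - 4X + 1`, which takes the value `1` at `0` and at `2`. The curve
`Y² = X³ - 4X + 1` is the fibre at `T = 0` of the pencils that realise the ranks `0`, `1`, `2`. -/
def baseCubic (R : Type*) [CommRing R] : R[X] :=
  X ^ 3 - 4 * X + 1

variable {R S : Type*} [CommRing R] [CommRing S]

lemma map_baseCubic (π : R →+* S) : (baseCubic R).map π = baseCubic S := by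
  simp [baseCubic]

lemma isMonicOfDegree_baseCubic [Nontrivial R] : (baseCubic R).IsMonicOfDegree 3 := by
  rw [baseCubic, ← map_ofNat C]
  exact ⟨by compute_degree!, by monicity!⟩

lemma cubicCurve_baseCubic : cubicCurve (baseCubic R) = ⟨0, 0, 0, -4, 1⟩ := by
  simp [cubicCurve, baseCubic, coeff_X, coeff_one]

lemma Δ_cubicCurve_baseCubic : (cubicCurve (baseCubic R)).Δ = 3664 := by
  rw [cubicCurve_baseCubic, Δ, b₂, b₄, b₆, b₈]
  norm_num

lemma eval_halvingPolynomial_baseCubic (x₀ x : R) :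
    (halvingPolynomial (cubicCurve (baseCubic R)) x₀).eval x =
      x ^ 4 + 8 * x ^ 2 - 8 * x + 16 - 4 * x₀ * (x ^ 3 - 4 * x + 1) := by
  nontriviality R
  rw [halvingPolynomial, Φ_two, Ψ₂Sq_cubicCurve isMonicOfDegree_baseCubic, cubicCurve_baseCubic]
  simp only [b₄, b₆, b₈, baseCubic, eval_add, eval_sub, eval_mul, eval_pow, eval_X, eval_C,
    eval_ofNat, eval_one]
  ring

lemma not_isRoot_baseCubic (x : ℚ) : ¬ (baseCubic ℚ).IsRoot x := by
  intro hx
  rw [← map_baseCubic (Int.castRingHom ℚ)] at hx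
  obtain ⟨a, ha⟩ := exists_isRoot_map_of_isRoot_map (Int.castRingHom (ZMod 3))
    isMonicOfDegree_baseCubic.monic hx
  rw [map_baseCubic, IsRoot.def, baseCubic] at ha
  simp only [eval_add, eval_sub, eval_mul, eval_pow, eval_X, eval_ofNat, eval_one] at ha
  revert a
  decide

lemma not_isRoot_halvingPolynomial_of_forall_zmod {N : ℕ} {x₀ : ℤ}
    (hN : ∀ a : ZMod N, a ^ 4 + 8 * a ^ 2 - 8 * a + 16 - 4 * x₀ * (a ^ 3 - 4 * a + 1) ≠ 0) (x : ℚ) :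
    ¬ (halvingPolynomial (cubicCurve (baseCubic ℚ)) x₀).IsRoot x := by
  intro hx
  rw [← map_baseCubic (Int.castRingHom ℚ), cubicCurve_map, ← eq_intCast (Int.castRingHom ℚ) x₀,
    halvingPolynomial_map] at hx
  obtain ⟨a, ha⟩ := exists_isRoot_map_of_isRoot_map (Int.castRingHom (ZMod N))
    (monic_halvingPolynomial _ _) hx
  rw [← halvingPolynomial_map, ← cubicCurve_map, map_baseCubic, IsRoot.def,
    eval_halvingPolynomial_baseCubic] at ha
  exact hN a ha

-- `0`, `2` and `-2` are the abscissas of `(0, 1)`, `(2, 1)` and their sum on `Y² = X³ - 4X + 1`.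
lemma not_isRoot_halvingPolynomial_baseCubic {x₀ : ℚ} (hx₀ : x₀ = 0 ∨ x₀ = 2 ∨ x₀ = -2) (x : ℚ) :
    ¬ (halvingPolynomial (cubicCurve (baseCubic ℚ)) x₀).IsRoot x := by
  rcases hx₀ with rfl | rfl | rfl
  · exact_mod_cast not_isRoot_halvingPolynomial_of_forall_zmod (N := 7) (x₀ := 0) (by decide) x
  · exact_mod_cast not_isRoot_halvingPolynomial_of_forall_zmod (N := 16) (x₀ := 2) (by decide) x
  · exact_mod_cast not_isRoot_halvingPolynomial_of_forall_zmod (N := 16) (x₀ := -2) (by decide) x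

/-- The product of the `X - 2i` over `i < m`. For `m ≤ 2` the cubic `baseCubic` takes the value `1`
at each of its zeros, so that `(2i, 1)` is a point of the pencil with these parameters. -/
def evenZeros (m : ℕ) : ℚ[X] :=
  ∏ i : Fin m, (X - C (2 * (i : ℚ)))

lemma natDegree_evenZeros (m : ℕ) : (evenZeros m).natDegree = m := by
  rw [evenZeros, natDegree_finsetProd_X_sub_C_eq_card, Finset.card_univ, Fintype.card_fin]

lemma monic_evenZeros (m : ℕ) : (evenZeros m).Monic :=
  monic_prod_X_sub_C _ _

lemma eval_baseCubic_two_mul {m : ℕ} (hm : m ≤ 2) (i : Fin m) :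
    (1 : ℚ) ^ 2 = (baseCubic ℚ).eval (2 * (i : ℚ)) := by
  have hi : (i : ℕ) < 2 := i.2.trans_le hm
  interval_cases (i : ℕ) <;> norm_num [baseCubic]

lemma nonsingular_two_mul_one {m : ℕ} (hm : m ≤ 2) (i : Fin m) :
    (pencilCurve (evenZeros m) (baseCubic ℚ)).toAffine.Nonsingular
      (RatFunc.C (2 * (i : ℚ))) (RatFunc.C 1) := by
  have hdeg : (evenZeros m).natDegree < 3 := by rw [natDegree_evenZeros]; omega
  refine nonsingular_pencilCurve hdeg isMonicOfDegree_baseCubic ?_ ?_ (eval_baseCubic_two_mul hm i)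
  · norm_num [Δ_cubicCurve_baseCubic]
  · rw [evenZeros, IsRoot.def, eval_prod]
    exact Finset.prod_eq_zero (Finset.mem_univ i) (by simp)

lemma exists_sum_some_eq_some {m : ℕ} (hm : m ≤ 2) {s : Finset (Fin m)} (hs : s.Nonempty) :
    ∃ (x₀ : ℚ[X]) (x y : RatFunc ℚ) (h : _), algebraMap ℚ[X] (RatFunc ℚ) x₀ = x ∧
      (x₀.eval 0 = 0 ∨ x₀.eval 0 = 2 ∨ x₀.eval 0 = -2) ∧
      ∑ i ∈ s, Affine.Point.some _ _ (nonsingular_two_mul_one hm i) = .some x y h := by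
  have hpos := hs.card_pos
  have hle := card_finset_fin_le s
  obtain hone | htwo : s.card = 1 ∨ s.card = 2 := by omega
  · obtain ⟨i, rfl⟩ := Finset.card_eq_one.mp hone
    refine ⟨C (2 * (i : ℚ)), _, _, nonsingular_two_mul_one hm i, RatFunc.algebraMap_C _, ?_,
      Finset.sum_singleton _ _⟩
    have hi : (i : ℕ) < 2 := i.2.trans_le hm
    interval_cases (i : ℕ) <;> norm_num
  · obtain rfl : m = 2 := by omega
    obtain rfl : s = Finset.univ := Finset.eq_univ_of_card s htwo
    rw [Fin.sum_univ_two]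
    obtain ⟨y, h, hadd⟩ := exists_some_add_some_eq_some_of_Y_eq (nonsingular_two_mul_one hm 0)
      (nonsingular_two_mul_one hm 1) (by simp)
    refine ⟨-X - 2, _, y, h, ?_, by norm_num, hadd⟩
    have hB := (monic_evenZeros 2).coeff_natDegree
    rw [natDegree_evenZeros] at hB
    simp [map_algebraMap_pencilCubic, hB, baseCubic, coeff_X, coeff_one, map_ofNat]

lemma two_nsmul_ne_sum_some {m : ℕ} (hm : m ≤ 2) {s : Finset (Fin m)} (hs : s.Nonempty)
    (P : (pencilCurve (evenZeros m) (baseCubic ℚ)).toAffine.Point) :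
    2 • P ≠ ∑ i ∈ s, .some _ _ (nonsingular_two_mul_one hm i) := by
  obtain ⟨x₀, x, y, h, hx, heval, hsum⟩ := exists_sum_some_eq_some hm hs
  rw [hsum]
  exact two_nsmul_ne_some_pencilCurve hx h (not_isRoot_halvingPolynomial_baseCubic heval) P

lemma rankW_pencilCurve_evenZeros {m : ℕ} (hm : m ≤ 2) :
    rankW (pencilCurve (evenZeros m) (baseCubic ℚ)) = m := by
  have hdeg : (evenZeros m).natDegree < 3 := by rw [natDegree_evenZeros]; omega
  have hli := linearIndependent_int_of_two_nsmul_ne_sum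
    (fun _ ↦ eq_zero_of_two_nsmul_eq_zero_pencilCurve two_ne_zero hdeg isMonicOfDegree_baseCubic
      not_isRoot_baseCubic) fun _ ↦ two_nsmul_ne_sum_some hm
  have hgen := closure_range_some_eq_top rfl (by rw [Fintype.card_fin]; omega)
    isMonicOfDegree_baseCubic (nonsingular_two_mul_one hm)
  rw [rankW, finrank_tensorProduct_eq_card hli hgen, Fintype.card_fin]

end RationalExample

end PencilRank

/-- For each `m ∈ {0,1,2}` there are `B, C ∈ ℚ[X]` with `B ≠ 0`, `deg B ≤ 2`, `C` monic of
degree 3, such that the Weierstrass curve `Y² = B(X)T + C(X)` over `ℚ(T)` has nonzero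
discriminant and rank exactly `m`. -/
theorem stmt_13 :
    ∀ m : ℕ, m ≤ 2 → ∃ B C : ℚ[X], B ≠ 0 ∧ B.natDegree ≤ 2 ∧ C.Monic ∧ C.natDegree = 3 ∧
      (surfW 0 B C).Δ ≠ 0 ∧ rankW (surfW 0 B C) = m := by
  intro m hm
  refine ⟨PencilRank.evenZeros m, PencilRank.baseCubic ℚ, (PencilRank.monic_evenZeros m).ne_zero,
    (PencilRank.natDegree_evenZeros m).trans_le hm, PencilRank.isMonicOfDegree_baseCubic.monic,
    PencilRank.isMonicOfDegree_baseCubic.natDegree_eq, ?_, ?_⟩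
  · rw [PencilRank.surfW_eq_pencilCurve]
    exact PencilRank.Δ_pencilCurve_ne_zero (by norm_num [PencilRank.Δ_cubicCurve_baseCubic])
  · rw [PencilRank.surfW_eq_pencilCurve, PencilRank.rankW_pencilCurve_evenZeros hm]

end
end

section
/- Let C ∈ ℚ[X] be monic of degree 3 with nonzero discriminant and let 𝒞 be the elliptic curve over ℚ defined by y² = C(x). Assume that 𝒞(ℚ) has rank 0 and trivial torsion, i.e. the only rational point of 𝒞 is the point at infinity. Then for every polynomial B ∈ ℚ[X] with deg B ≤ 2 and every nonzero integer k, the polynomial B² − 4k²C is, up to a nonzero rational constant factor, a power of an irreducible polynomial in ℚ[X]; that is, B² − 4k²C = λ·Fⁿ for some λ ∈ ℚ \ {0}, some irreducible F ∈ ℚ[X] and some integer n ≥ 1. -/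
open Polynomial UniqueFactorizationMonoid
open scoped TensorProduct

noncomputable section
attribute [local instance] Classical.propDecidable

/-- The elliptic curve `y² = C(x)` over `ℚ` attached to a monic cubic `C`. -/
def cubW (C : ℚ[X]) : WeierstrassCurve ℚ where
  a₁ := 0
  a₂ := C.coeff 2
  a₃ := 0
  a₄ := C.coeff 1
  a₆ := C.coeff 0

/-!
Suppose a polynomial `u` of degree at most two divides `b² - f`, where `f` is the cubic. Reducing
`b` modulo `u` gives a polynomial `l` of degree at most one such that `u` also divides the cubic
`l² - f`, whose roots are the abscissae of the intersections of the line `y = l(x)` with the curve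
`y² = f(x)`. A proper factorization of a cubic has a linear factor, hence yields a rational point:
this is the chord construction, applied to a pair of conjugate points. So if the curve has no affine
rational point, then `b² - f`, of degree three or four when `deg b ≤ 2`, is irreducible.
The factor `4k²` is harmless, since `B² - 4k²C = 4k²((B / 2k)² - C)`.
-/

theorem dvd_mod_sq_sub_iff {R : Type*} [EuclideanDomain R] {u b f : R} :
    u ∣ (b % u) ^ 2 - f ↔ u ∣ b ^ 2 - f := by
  refine dvd_iff_dvd_of_dvd_sub ⟨-(b / u) * (b % u + b), ?_⟩
  linear_combination (b % u + b) * EuclideanDomain.mod_add_div b u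

theorem natDegree_sq_sub_of_odd {R : Type*} [Ring R] [NoZeroDivisors R] {f : R[X]}
    (hf : Odd f.natDegree) (b : R[X]) :
    (b ^ 2 - f).natDegree = max (2 * b.natDegree) f.natDegree := by
  rw [← natDegree_pow]
  have hne : (b ^ 2).natDegree ≠ f.natDegree := by
    rw [natDegree_pow]
    exact fun h => Nat.not_even_iff_odd.mpr hf (h ▸ even_two_mul _)
  rcases hne.lt_or_gt with h | h
  · rw [natDegree_sub_eq_right_of_natDegree_lt h, max_eq_right h.le]
  · rw [natDegree_sub_eq_left_of_natDegree_lt h, max_eq_left h.le]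

theorem not_isRoot_sq_sub {R : Type*} [CommRing R] {f : R[X]}
    (hf : ∀ x y : R, y ^ 2 ≠ f.eval x) (b : R[X]) (x : R) :
    ¬ (b ^ 2 - f).IsRoot x := by
  simpa only [IsRoot.def, eval_sub, eval_pow, sub_eq_zero] using hf x (b.eval x)

section

variable {K : Type*} [Field K]

theorem irreducible_sq_sub_of_natDegree_le_one {f : K[X]} (hdeg : f.natDegree = 3)
    (hf : ∀ x y : K, y ^ 2 ≠ f.eval x) {l : K[X]} (hl : l.natDegree ≤ 1) :
    Irreducible (l ^ 2 - f) := by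
  have hdeg' : (l ^ 2 - f).natDegree = 3 := by
    rw [natDegree_sq_sub_of_odd (hdeg ▸ by decide), hdeg]
    omega
  rw [irreducible_iff_roots_eq_zero_of_degree_le_three (by omega) hdeg'.le]
  exact Multiset.eq_zero_of_forall_notMem fun x hx =>
    not_isRoot_sq_sub hf l x (isRoot_of_mem_roots hx)

theorem not_dvd_sq_sub_of_natDegree_mem_Ioc {f : K[X]} (hdeg : f.natDegree = 3)
    (hf : ∀ x y : K, y ^ 2 ≠ f.eval x) {u : K[X]} (hu : u.natDegree ∈ Finset.Ioc 0 2) (b : K[X]) :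
    ¬ u ∣ b ^ 2 - f := by
  obtain ⟨hu_pos, hu_le⟩ := Finset.mem_Ioc.mp hu
  have hl : (b % u).natDegree ≤ 1 := by
    have := natDegree_mod_lt b hu_pos.ne'
    omega
  have hirr := irreducible_sq_sub_of_natDegree_le_one hdeg hf hl
  rw [← dvd_mod_sq_sub_iff]
  intro hdvd
  rcases hirr.dvd_iff.mp hdvd with hunit | hassoc
  · exact hu_pos.ne' (natDegree_eq_zero_of_isUnit hunit)
  · have := natDegree_eq_of_degree_eq (degree_eq_degree_of_associated hassoc)
    rw [natDegree_sq_sub_of_odd (hdeg ▸ by decide), hdeg] at this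
    omega

theorem irreducible_sq_sub {f : K[X]} (hdeg : f.natDegree = 3)
    (hf : ∀ x y : K, y ^ 2 ≠ f.eval x) {b : K[X]} (hb : b.natDegree ≤ 2) :
    Irreducible (b ^ 2 - f) := by
  have hdeg' : (b ^ 2 - f).natDegree = max (2 * b.natDegree) 3 := by
    rw [natDegree_sq_sub_of_odd (hdeg ▸ by decide), hdeg]
  have hpos : 0 < (b ^ 2 - f).natDegree := by omega
  rw [irreducible_iff_lt_natDegree_lt (ne_zero_of_natDegree_gt hpos)
    (not_isUnit_of_natDegree_pos _ hpos)]
  intro u _ hu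
  have hhalf : (b ^ 2 - f).natDegree / 2 ≤ 2 := by omega
  exact not_dvd_sq_sub_of_natDegree_mem_Ioc hdeg hf (Finset.Ioc_subset_Ioc_right hhalf hu) b

theorem stmt_15_general {f : K[X]} (hdeg : f.natDegree = 3) (hf : ∀ x y : K, y ^ 2 ≠ f.eval x)
    {b : K[X]} (hb : b.natDegree ≤ 2) {c : K} (hc : c ≠ 0) :
    Irreducible (b ^ 2 - C (c ^ 2) * f) := by
  have hscale : b ^ 2 - C (c ^ 2) * f = C (c ^ 2) * ((C c⁻¹ * b) ^ 2 - f) := by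
    have hinv : C c * C c⁻¹ = 1 := by rw [← C_mul, mul_inv_cancel₀ hc, C_1]
    rw [C_pow]
    linear_combination -(b ^ 2 * (C c * C c⁻¹ + 1)) * hinv
  rw [hscale, irreducible_isUnit_mul (isUnit_C.mpr (pow_ne_zero 2 hc).isUnit)]
  exact irreducible_sq_sub hdeg hf ((natDegree_C_mul_le _ _).trans hb)

end

theorem cubW_equation_iff {f : ℚ[X]} (hf : f.Monic) (hdeg : f.natDegree = 3) (x y : ℚ) :
    (cubW f).toAffine.Equation x y ↔ y ^ 2 = f.eval x := by
  have hlead : f.coeff 3 = 1 := hdeg ▸ hf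
  rw [WeierstrassCurve.Affine.equation_iff, eval_eq_sum_range, hdeg]
  simp only [cubW, Finset.sum_range_succ, Finset.sum_range_zero, hlead]
  ring_nf

theorem sq_ne_eval_of_forall_point_eq_zero {f : ℚ[X]} (hf : f.Monic) (hdeg : f.natDegree = 3)
    (hΔ : (cubW f).Δ ≠ 0) (htriv : ∀ P : (cubW f).toAffine.Point, P = 0) (x y : ℚ) :
    y ^ 2 ≠ f.eval x := by
  rw [Ne, ← cubW_equation_iff hf hdeg,
    WeierstrassCurve.Affine.equation_iff_nonsingular_of_Δ_ne_zero hΔ]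
  exact fun h => WeierstrassCurve.Affine.Point.some_ne_zero h (htriv _)

/-- If the elliptic curve `y² = C(x)` (with `C ∈ ℚ[X]` monic cubic of nonzero discriminant)
has rank `0` and trivial torsion, i.e. its only rational point is the point at infinity, then
for every `B ∈ ℚ[X]` with `deg B ≤ 2` and every nonzero integer `k`, the polynomial
`B² - 4k²C` is a nonzero rational constant times a power of an irreducible polynomial. -/
theorem stmt_15 (C : ℚ[X]) (hC : C.Monic) (hdegC : C.natDegree = 3)
    (hΔ : (cubW C).Δ ≠ 0)
    (htriv : ∀ P : (cubW C).toAffine.Point, P = 0) :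
    ∀ B : ℚ[X], B.natDegree ≤ 2 → ∀ k : ℤ, k ≠ 0 →
      ∃ (lam : ℚ) (F : ℚ[X]) (n : ℕ), lam ≠ 0 ∧ Irreducible F ∧ 1 ≤ n ∧
        B ^ 2 - Polynomial.C (4 * (k : ℚ) ^ 2) * C = Polynomial.C lam * F ^ n := by
  intro B hB k hk
  have hno := sq_ne_eval_of_forall_point_eq_zero hC hdegC hΔ htriv
  have hirr := stmt_15_general hdegC hno hB (mul_ne_zero two_ne_zero (Int.cast_ne_zero.mpr hk))
  exact ⟨1, _, 1, one_ne_zero, hirr, le_rfl, by rw [C_1, one_mul, pow_one]; congr 3; ring⟩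

end
end
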